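/- Let R be a Dedekind domain and M an R-module. If Tor_1^R(M, M) = 0, then M is a flat R-module. -/

import Mathlib

open CategoryTheory

/-!
Let `M ⊆ N` with `Tor₁(N, M) = 0`; the theorem is the case `N = M`. Choose an exact sequence
`0 → K → P → M → 0` with `P` projective, so that `N ⊗ K → N ⊗ P` is injective. Over a Dedekind
domain `K` is flat, so injectivity descends to submodules of `N`, in particular to `R x ≅ R ⧸ I`
where `I` is the annihilator of an element `x` of `M`. Injectivity of `(R ⧸ I) ⊗ K → (R ⧸ I) ⊗ P`
says that `K ⊓ I • P ≤ I • K`, so a lift `y` of `x` to `P` satisfies `I • y ≤ I • K`. If `x` is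
torsion then `I` is nonzero, hence invertible, and cancelling it gives `y ∈ K`, that is, `x = 0`.
So `M` is torsion-free, which means flat.
-/

universe u

section CommRing

variable {R : Type*} [CommRing R]
  {L N P Q : Type*} [AddCommGroup L] [Module R L] [AddCommGroup N] [Module R N]
  [AddCommGroup P] [Module R P] [AddCommGroup Q] [Module R Q]

theorem lTensor_ker_subtype_injective_of_exact {P₁ P₂ : Type*} [AddCommGroup P₁] [Module R P₁]
    [AddCommGroup P₂] [Module R P₂] {d₂ : P₂ →ₗ[R] P₁} {d₁ : P₁ →ₗ[R] P} {f : P →ₗ[R] Q}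
    (hd : d₁ ∘ₗ d₂ = 0) (hf : Function.Exact d₁ f)
    (hN : Function.Exact (d₂.lTensor N) (d₁.lTensor N)) :
    Function.Injective (f.ker.subtype.lTensor N) := by
  rw [hf.linearMap_ker_eq, injective_iff_map_eq_zero]
  intro t ht
  obtain ⟨s, rfl⟩ := LinearMap.lTensor_surjective N d₁.surjective_rangeRestrict t
  rw [← LinearMap.lTensor_comp_apply, LinearMap.subtype_comp_codRestrict] at ht
  obtain ⟨u, rfl⟩ := (hN s).1 ht
  have hd' : d₁.rangeRestrict ∘ₗ d₂ = 0 := by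
    ext z
    exact LinearMap.congr_fun hd z
  rw [← LinearMap.lTensor_comp_apply, hd', LinearMap.lTensor_zero, LinearMap.zero_apply]

theorem lTensor_injective_of_injective {g : P →ₗ[R] Q} {i : L →ₗ[R] N} [Module.Flat R P]
    (hi : Function.Injective i) (hg : Function.Injective (g.lTensor N)) :
    Function.Injective (g.lTensor L) := by
  have hcomm : i.rTensor Q ∘ₗ g.lTensor L = g.lTensor N ∘ₗ i.rTensor P := by
    rw [LinearMap.rTensor_comp_lTensor, LinearMap.lTensor_comp_rTensor]
  have hinj : Function.Injective (i.rTensor Q ∘ₗ g.lTensor L) := by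
    rw [hcomm]
    exact hg.comp (Module.Flat.rTensor_preserves_injective_linearMap i hi)
  exact Function.Injective.of_comp (f := i.rTensor Q) hinj

open TensorProduct in
theorem inf_smul_top_le_smul_of_lTensor_subtype_injective {I : Ideal R} {K : Submodule R P}
    (hK : Function.Injective (K.subtype.lTensor (R ⧸ I))) :
    K ⊓ I • (⊤ : Submodule R P) ≤ I • K := by
  rintro k ⟨hk, hkI⟩
  have tmul_eq_zero_in_P : (1 : R ⧸ I) ⊗ₜ[R] k = 0 := by
    rwa [← quotTensorEquivQuotSMul_symm_mk, LinearEquiv.map_eq_zero_iff,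
      Submodule.Quotient.mk_eq_zero]
  have tmul_eq_zero_in_K : (1 : R ⧸ I) ⊗ₜ[R] (⟨k, hk⟩ : K) = 0 :=
    (map_eq_zero_iff _ hK).1 tmul_eq_zero_in_P
  rw [← quotTensorEquivQuotSMul_symm_mk, LinearEquiv.map_eq_zero_iff,
    Submodule.Quotient.mk_eq_zero] at tmul_eq_zero_in_K
  exact (Submodule.mem_smul_top_iff I K ⟨k, hk⟩).1 tmul_eq_zero_in_K

open scoped Pointwise in
theorem le_of_ideal_smul_le_smul_of_dvd_span_singleton {I : Ideal R} {a : R}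
    (hI : I ∣ Ideal.span {a}) (ha : IsSMulRegular P a) {K K' : Submodule R P}
    (h : I • K ≤ I • K') : K ≤ K' := by
  obtain ⟨J, hJ⟩ := hI
  have span_smul (L : Submodule R P) : a • L = J • I • L := by
    rw [← Submodule.ideal_span_singleton_smul, hJ, mul_comm, ← smul_eq_mul, Submodule.smul_assoc]
  intro y hy
  have hay : a • y ∈ a • K' := by
    rw [span_smul]
    apply smul_mono_right J h
    rw [← span_smul]
    exact Submodule.smul_mem_pointwise_smul y a K hy
  obtain ⟨k, hk, hky⟩ := (Submodule.mem_smul_pointwise_iff_exists _ _ _).1 hay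
  exact ha hky ▸ hk

end CommRing

theorem flat_of_lTensor_ker_subtype_injective {R : Type*} [CommRing R] [IsDedekindDomain R]
    {M N P : Type*} [AddCommGroup M] [Module R M] [AddCommGroup N] [Module R N]
    [AddCommGroup P] [Module R P] [Module.IsTorsionFree R P] {f : P →ₗ[R] M} {i : M →ₗ[R] N}
    (hf : Function.Surjective f) (hi : Function.Injective i)
    (hN : Function.Injective (f.ker.subtype.lTensor N)) : Module.Flat R M := by
  suffices Module.IsTorsionFree R M from inferInstance
  refine .of_smul_eq_zero fun a x hax ↦ or_iff_not_imp_left.2 fun ha ↦ ?_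
  obtain ⟨y, rfl⟩ := hf x
  set φ : R →ₗ[R] N := LinearMap.toSpanSingleton R N (i (f y)) with hφ
  have mem_ker_φ (r : R) : r ∈ φ.ker ↔ r • f y = 0 := by
    rw [LinearMap.mem_ker, hφ, LinearMap.toSpanSingleton_apply, ← map_smul,
      map_eq_zero_iff i hi]
  have quotient_injective : Function.Injective (φ.ker.liftQ φ le_rfl) :=
    LinearMap.ker_eq_bot.1 (Submodule.ker_liftQ_eq_bot _ _ _ le_rfl)
  have smul_span_le : φ.ker • (R ∙ y) ≤ φ.ker • f.ker := by
    refine le_trans (le_inf ?_ (smul_mono_right _ le_top))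
      (inf_smul_top_le_smul_of_lTensor_subtype_injective
        (lTensor_injective_of_injective quotient_injective hN))
    rw [Submodule.smul_le]
    intro r hr z hz
    obtain ⟨s, rfl⟩ := Submodule.mem_span_singleton.1 hz
    rw [LinearMap.mem_ker, map_smul, map_smul, smul_comm, (mem_ker_φ r).1 hr, smul_zero]
  have dvd_span : φ.ker ∣ Ideal.span {a} := Ideal.dvd_span_singleton.2 ((mem_ker_φ a).2 hax)
  exact le_of_ideal_smul_le_smul_of_dvd_span_singleton dvd_span (smul_right_injective P ha)
    smul_span_le (Submodule.mem_span_singleton_self y)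

section Tor

variable {R : Type u} [CommRing R]

theorem isZero_Tor_succ_iff_exact_lTensor (N : ModuleCat.{u} R) {M : ModuleCat.{u} R}
    (P : ProjectiveResolution M) (n : ℕ) :
    Limits.IsZero (((Tor (ModuleCat R) (n + 1)).obj N).obj M) ↔
      Function.Exact ((P.complex.d (n + 2) (n + 1)).hom.lTensor N)
        ((P.complex.d (n + 1) n).hom.lTensor N) := by
  let F := (MonoidalCategory.tensoringLeft (ModuleCat R)).obj N
  let C := (F.mapHomologicalComplex _).obj P.complex
  calc Limits.IsZero (((Tor (ModuleCat R) (n + 1)).obj N).obj M)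
      ↔ Limits.IsZero (C.homology (n + 1)) := (P.isoLeftDerivedObj F (n + 1)).isZero_iff
    _ ↔ C.ExactAt (n + 1) := (C.exactAt_iff_isZero_homology _).symm
    _ ↔ (C.sc' (n + 2) (n + 1) n).Exact := C.exactAt_iff' _ _ _ (by simp) (by simp)
    _ ↔ _ := ShortComplex.ShortExact.moduleCat_exact_iff_function_exact _

theorem lTensor_ker_subtype_injective_of_isZero_Tor {N M : ModuleCat.{u} R}
    (h : Limits.IsZero (((Tor (ModuleCat R) 1).obj N).obj M)) (P : ProjectiveResolution M) :
    Function.Injective ((P.π.f 0).hom.ker.subtype.lTensor N) :=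
  lTensor_ker_subtype_injective_of_exact
    (congrArg ModuleCat.Hom.hom (P.complex.d_comp_d 2 1 0))
    ((ShortComplex.ShortExact.moduleCat_exact_iff_function_exact _).1 P.exact₀)
    ((isZero_Tor_succ_iff_exact_lTensor N P 0).1 h)

end Tor

theorem stmt_0_general {R : Type u} [CommRing R] [IsDedekindDomain R]
    {M N : Type u} [AddCommGroup M] [Module R M] [AddCommGroup N] [Module R N]
    {i : M →ₗ[R] N} (hi : Function.Injective i)
    (h : Limits.IsZero (((Tor (ModuleCat R) 1).obj (ModuleCat.of R N)).obj (ModuleCat.of R M))) :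
    Module.Flat R M := by
  obtain ⟨P⟩ := (HasProjectiveResolutions.out (ModuleCat.of R M)).out
  have : Module.Projective R (P.complex.X 0) := (IsProjective.iff_projective _).2 (P.projective 0)
  have hπ : Function.Surjective (P.π.f 0) := (ModuleCat.epi_iff_surjective _).1 inferInstance
  exact flat_of_lTensor_ker_subtype_injective hπ hi
    (lTensor_ker_subtype_injective_of_isZero_Tor h P)

/-- Let `R` be a Dedekind domain and `M` an `R`-module.
If `Tor₁^R(M, M) = 0`, then `M` is a flat `R`-module. -/
theorem stmt_0 (R : Type) [CommRing R] [IsDomain R] [IsDedekindDomain R]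
    (M : Type) [AddCommGroup M] [Module R M]
    (h : Limits.IsZero (((Tor (ModuleCat R) 1).obj (ModuleCat.of R M)).obj (ModuleCat.of R M))) :
    Module.Flat R M :=
  stmt_0_general (i := LinearMap.id) Function.injective_id h
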